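/- Separation theorem, converse part under the source semi-strong converse property (Theorem 6.7, part 2, source version, spectral form). Let V = {Vⁿ} be a general source with the property that for every strictly increasing sequence of positive integers n₁ < n₂ < … it holds that p-limsup_{i→∞} (1/n_i) log(1/P_{V^{n_i}}(V^{n_i})) = H̄(V), and let W = {Wⁿ} be a general channel. If V is transmissible over W, then H̄(V) ≤ sup_X I_(X;Y), where the supremum is over all channel inputs X = {Xⁿ} and Yⁿ is the channel output of Wⁿ on input Xⁿ. -/

import Mathlib

open Filter Real Topology

namespace ISC

/-- Words of length `n` over alphabet `A`. -/
abbrev Word (A : Type*) (n : ℕ) : Type _ := Fin n → A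

/-- `p` is a probability mass function. -/
def IsPMF {α : Type*} (p : α → ℝ) : Prop :=
  (∀ a, 0 ≤ p a) ∧ HasSum p 1

/-- Probability of the event `S` under the pmf `p`. -/
noncomputable def prob {α : Type*} (p : α → ℝ) (S : Set α) : ℝ :=
  ∑' a, S.indicator p a

/-- Output marginal `P_{Yⁿ}` of the channel `W` fed with the joint input law `P_{VⁿXⁿ}`. -/
noncomputable def outDist {𝒱 𝒳 𝒴 : Type*} {n : ℕ}
    (PVX : Word 𝒱 n × Word 𝒳 n → ℝ) (W : Word 𝒳 n → Word 𝒴 n → ℝ)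
    (y : Word 𝒴 n) : ℝ :=
  ∑' vx : Word 𝒱 n × Word 𝒳 n, PVX vx * W vx.2 y

/-- Joint law of `(Vⁿ, Xⁿ, Yⁿ)`: `P_{VⁿXⁿ}(v,x) · Wⁿ(y|x)`. -/
noncomputable def jointLaw {𝒱 𝒳 𝒴 : Type*} {n : ℕ}
    (PVX : Word 𝒱 n × Word 𝒳 n → ℝ) (W : Word 𝒳 n → Word 𝒴 n → ℝ) :
    Word 𝒱 n × Word 𝒳 n × Word 𝒴 n → ℝ :=
  fun z => PVX (z.1, z.2.1) * W z.2.1 z.2.2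

/-- The joint input law `P_{VⁿXⁿ}` induced by the deterministic encoder `φ`:
`P_{Vⁿ}(v) 1{x = φ(v)}`. -/
noncomputable def codeInput {𝒱 𝒳 : Type*} [DecidableEq 𝒳] {n : ℕ} (PV : Word 𝒱 n → ℝ)
    (φ : Word 𝒱 n → Word 𝒳 n) : Word 𝒱 n × Word 𝒳 n → ℝ :=
  fun vx => if vx.2 = φ vx.1 then PV vx.1 else 0

/-- Error probability `εₙ` of the joint source-channel code `(φ, ψ)`. -/
noncomputable def errProb {𝒱 𝒳 𝒴 : Type*} {n : ℕ}
    (PV : Word 𝒱 n → ℝ) (W : Word 𝒳 n → Word 𝒴 n → ℝ)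
    (φ : Word 𝒱 n → Word 𝒳 n) (ψ : Word 𝒴 n → Word 𝒱 n) : ℝ :=
  ∑' v, PV v * prob (W (φ v)) {y | ψ y ≠ v}

/-- `V` is transmissible over `W`. -/
def Transmissible {𝒱 𝒳 𝒴 : Type*} (PV : (n : ℕ) → Word 𝒱 n → ℝ)
    (W : (n : ℕ) → Word 𝒳 n → Word 𝒴 n → ℝ) : Prop :=
  ∃ (φ : (n : ℕ) → Word 𝒱 n → Word 𝒳 n) (ψ : (n : ℕ) → Word 𝒴 n → Word 𝒱 n),
    Tendsto (fun n => errProb (PV n) (W n) (φ n) (ψ n)) atTop (nhds 0)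

/-- Output marginal of the channel `W` for an input distribution `P_{Xⁿ}`. -/
noncomputable def outDistX {𝒳 𝒴 : Type*} {n : ℕ}
    (PX : Word 𝒳 n → ℝ) (W : Word 𝒳 n → Word 𝒴 n → ℝ) (y : Word 𝒴 n) : ℝ :=
  ∑' x : Word 𝒳 n, PX x * W x y

/-- Joint law of `(Xⁿ, Yⁿ)`: `P_{Xⁿ}(x) · Wⁿ(y|x)`. -/
noncomputable def jointXY {𝒳 𝒴 : Type*} {n : ℕ}
    (PX : Word 𝒳 n → ℝ) (W : Word 𝒳 n → Word 𝒴 n → ℝ) :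
    Word 𝒳 n × Word 𝒴 n → ℝ :=
  fun z => PX z.1 * W z.1 z.2

/-- Limit superior in probability of a sequence of random variables `Z i`
distributed according to the pmfs `p i`. -/
noncomputable def plimsup {α : ℕ → Type*} (p : (i : ℕ) → α i → ℝ)
    (Z : (i : ℕ) → α i → ℝ) : EReal :=
  sInf {β : EReal |
    Tendsto (fun i => prob (p i) {a | β < (Z i a : EReal)}) atTop (nhds 0)}

/-- Limit inferior in probability of a sequence of random variables `Z i`
distributed according to the pmfs `p i`. -/
noncomputable def pliminf {α : ℕ → Type*} (p : (i : ℕ) → α i → ℝ)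
    (Z : (i : ℕ) → α i → ℝ) : EReal :=
  sSup {β : EReal |
    Tendsto (fun i => prob (p i) {a | (Z i a : EReal) < β}) atTop (nhds 0)}

/-- Spectral sup-entropy rate `H̄(V)`. -/
noncomputable def Hbar {𝒱 : Type*} (PV : (n : ℕ) → Word 𝒱 n → ℝ) : EReal :=
  plimsup (fun n => PV n) (fun n v => (1 / (n : ℝ)) * Real.log (1 / PV n v))

/-- Spectral inf-entropy rate `H_(V)`. -/
noncomputable def Hlow {𝒱 : Type*} (PV : (n : ℕ) → Word 𝒱 n → ℝ) : EReal :=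
  pliminf (fun n => PV n) (fun n v => (1 / (n : ℝ)) * Real.log (1 / PV n v))

/-- Spectral inf-information rate `I_(X;Y)` of the channel `W` with input `X`. -/
noncomputable def Ilow {𝒳 𝒴 : Type*} (PX : (n : ℕ) → Word 𝒳 n → ℝ)
    (W : (n : ℕ) → Word 𝒳 n → Word 𝒴 n → ℝ) : EReal :=
  pliminf (fun n => jointXY (PX n) (W n))
    (fun n z => (1 / (n : ℝ)) * Real.log (W n z.1 z.2 / outDistX (PX n) (W n) z.2))

/-- Spectral sup-information rate `Ī(X;Y)` of the channel `W` with input `X`. -/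
noncomputable def Ihigh {𝒳 𝒴 : Type*} (PX : (n : ℕ) → Word 𝒳 n → ℝ)
    (W : (n : ℕ) → Word 𝒳 n → Word 𝒴 n → ℝ) : EReal :=
  plimsup (fun n => jointXY (PX n) (W n))
    (fun n z => (1 / (n : ℝ)) * Real.log (W n z.1 z.2 / outDistX (PX n) (W n) z.2))

/-- `sup_X I_(X;Y)`: the supremum over all channel inputs. -/
noncomputable def supIlow {𝒳 𝒴 : Type*}
    (W : (n : ℕ) → Word 𝒳 n → Word 𝒴 n → ℝ) : EReal :=
  ⨆ PX : {PX : (n : ℕ) → Word 𝒳 n → ℝ // ∀ n, IsPMF (PX n)}, Ilow PX.1 W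

/-! Restrict the source to the messages whose self-information rate exceeds a level `b` below every
subsequential sup-entropy rate; their total probability stays bounded away from zero, so the code
still has vanishing error on the conditioned source. The conditioned source has no message more
likely than about `exp (-n b)`, and the Verdú–Han argument then shows that the encoder output `X`,
used as a channel input, has information density rate at least `b' < b` with probability tending to
one: when the density is at most `exp (n b')`, the joint probability of a message and an output is
at most `exp (n (b' - b))` times that of the output, and for each output only one message is decoded
correctly. -/

section Pmf

variable {α β γ : Type*} {p q : α → ℝ} {S T : Set α}

lemma prob_nonneg (hp : ∀ a, 0 ≤ p a) (S : Set α) : 0 ≤ prob p S :=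
  tsum_nonneg fun a => Set.indicator_nonneg (fun a _ => hp a) a

lemma prob_singleton (p : α → ℝ) (a : α) : prob p {a} = p a := by
  classical
  rw [prob, tsum_eq_single a fun b hb => by simp [hb]]
  simp

lemma prob_mono_of_ne_zero (hp : IsPMF p) (hST : ∀ a, p a ≠ 0 → a ∈ S → a ∈ T) :
    prob p S ≤ prob p T := by
  have hT (a : α) : 0 ≤ T.indicator p a := Set.indicator_nonneg (fun a _ => hp.1 a) a
  refine (hp.2.summable.indicator S).tsum_le_tsum
    (Set.indicator_le' (fun a haS => ?_) fun a _ => hT a) (hp.2.summable.indicator T)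
  by_cases hpa : p a = 0
  · exact hpa.trans_le (hT a)
  · rw [Set.indicator_of_mem (hST a hpa haS)]

lemma prob_union_le (hp : IsPMF p) (S T : Set α) : prob p (S ∪ T) ≤ prob p S + prob p T := by
  have hS := hp.2.summable.indicator S
  have hT := hp.2.summable.indicator T
  rw [prob, prob, prob, ← hS.tsum_add hT]
  refine (hp.2.summable.indicator _).tsum_le_tsum (fun a => ?_) (hS.add hT)
  have := hp.1 a
  by_cases haS : a ∈ S <;> by_cases haT : a ∈ T <;> simp [haS, haT, this]

lemma prob_le_mul_prob {c : ℝ} (hp : Summable p) (hq : Summable q) (hqp : ∀ a, q a ≤ c * p a)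
    (S : Set α) : prob q S ≤ c * prob p S := by
  rw [prob, prob, ← tsum_mul_left]
  refine (hq.indicator S).tsum_le_tsum (fun a => ?_) ((hp.indicator S).mul_left c)
  by_cases haS : a ∈ S <;> simp [haS, hqp a]

/-- The law of `f` under the pmf `p`. -/
noncomputable def pushforward (f : α → β) (p : α → ℝ) (b : β) : ℝ :=
  prob p (f ⁻¹' {b})

lemma hasSum_indicator_pushforward (hp : Summable p) (f : α → β) (S : Set β) :
    HasSum (S.indicator (pushforward f p)) (prob p (f ⁻¹' S)) := by
  refine ((hp.indicator (f ⁻¹' S)).hasSum.tsum_fiberwise f).congr_fun fun b => ?_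
  rw [tsum_subtype (f ⁻¹' {b}) ((f ⁻¹' S).indicator p), Set.indicator_indicator]
  by_cases hb : b ∈ S
  · have hfiber : f ⁻¹' {b} ∩ f ⁻¹' S = f ⁻¹' {b} := by
      rw [← Set.preimage_inter, Set.singleton_inter_of_mem hb]
    rw [Set.indicator_of_mem hb, hfiber, pushforward, prob]
  · have hfiber : f ⁻¹' {b} ∩ f ⁻¹' S = ∅ := by
      rw [← Set.preimage_inter, Set.singleton_inter_eq_empty.2 hb, Set.preimage_empty]
    simp [hb, hfiber]

lemma prob_pushforward (hp : Summable p) (f : α → β) (S : Set β) :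
    prob (pushforward f p) S = prob p (f ⁻¹' S) :=
  (hasSum_indicator_pushforward hp f S).tsum_eq

lemma pushforward_pushforward (hp : Summable p) (f : α → β) (g : β → γ) :
    pushforward g (pushforward f p) = pushforward (g ∘ f) p :=
  funext fun c => prob_pushforward hp f (g ⁻¹' {c})

protected lemma IsPMF.pushforward (hp : IsPMF p) (f : α → β) : IsPMF (pushforward f p) := by
  refine ⟨fun b => prob_nonneg hp.1 _, ?_⟩
  simpa [prob, hp.2.tsum_eq] using hasSum_indicator_pushforward hp.2.summable f Set.univ

/-- The pmf `p` conditioned on the event `A`. So that it is always a pmf, conditioning on a null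
event leaves `p` unchanged. -/
noncomputable def condDist (p : α → ℝ) (A : Set α) : α → ℝ :=
  open Classical in if prob p A = 0 then p else fun a => A.indicator p a / prob p A

lemma condDist_apply (hA : prob p S ≠ 0) (a : α) : condDist p S a = S.indicator p a / prob p S := by
  rw [condDist, if_neg hA]

lemma condDist_le (hp : ∀ a, 0 ≤ p a) (hS : prob p S ≠ 0) (a : α) :
    condDist p S a ≤ (prob p S)⁻¹ * p a := by
  rw [condDist_apply hS, div_eq_inv_mul]
  exact mul_le_mul_of_nonneg_left (Set.indicator_le_self' (fun a _ => hp a) a)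
    (inv_nonneg.2 (prob_nonneg hp S))

lemma condDist_setOf_le_le (hp : ∀ v, 0 ≤ p v) {a : ℝ} (ha : 0 ≤ a)
    (hA : prob p {v | p v ≤ a} ≠ 0) (v : α) :
    condDist p {v | p v ≤ a} v ≤ a / prob p {v | p v ≤ a} := by
  rw [condDist_apply hA]
  gcongr
  · exact prob_nonneg hp _
  · exact Set.indicator_le' (fun _ hv => hv) (fun _ _ => ha) v

protected lemma IsPMF.condDist (hp : IsPMF p) (A : Set α) : IsPMF (condDist p A) := by
  by_cases hA : prob p A = 0
  · rwa [condDist, if_pos hA]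
  · have hsum := (hp.2.summable.indicator A).hasSum.div_const (prob p A)
    rw [← prob, div_self hA] at hsum
    rw [condDist, if_neg hA]
    exact ⟨fun a => div_nonneg (Set.indicator_nonneg (fun a _ => hp.1 a) a) (prob_nonneg hp.1 A),
      hsum⟩

end Pmf

section Channel

variable {α β γ : Type*} {p : α → ℝ} {w : α → β → ℝ}

/-- The joint law of the input and the output of the channel `w` fed with `p`; `jointXY` is its
instance for words. -/
def compProd (p : α → ℝ) (w : α → β → ℝ) (z : α × β) : ℝ :=
  p z.1 * w z.1 z.2

protected lemma IsPMF.compProd (hp : IsPMF p) (hw : ∀ a, IsPMF (w a)) : IsPMF (compProd p w) := by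
  have hnonneg (z : α × β) : 0 ≤ compProd p w z := mul_nonneg (hp.1 _) ((hw _).1 _)
  have hfiber (a : α) : HasSum (fun b => compProd p w (a, b)) (p a) := by
    simpa [compProd] using (hw a).2.mul_left (p a)
  have hsummable : Summable (compProd p w) :=
    (summable_prod_of_nonneg hnonneg).2
      ⟨fun a => (hfiber a).summable, by simpa only [(hfiber _).tsum_eq] using hp.2.summable⟩
  have htotal : ∑' z, compProd p w z = 1 := (hsummable.hasSum.prod_fiberwise hfiber).unique hp.2
  exact ⟨hnonneg, htotal ▸ hsummable.hasSum⟩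

lemma prob_compProd (hp : IsPMF p) (hw : ∀ a, IsPMF (w a)) (S : Set (α × β)) :
    prob (compProd p w) S = ∑' a, p a * prob (w a) (Prod.mk a ⁻¹' S) := by
  classical
  rw [prob, ((hp.compProd hw).2.summable.indicator S).tsum_prod]
  refine tsum_congr fun a => ?_
  rw [prob, ← tsum_mul_left]
  exact tsum_congr fun b => by simp [Set.indicator_apply, compProd]

lemma pushforward_snd_compProd (hp : IsPMF p) (hw : ∀ a, IsPMF (w a)) (b : β) :
    pushforward Prod.snd (compProd p w) b = ∑' a, p a * w a b := by
  rw [pushforward, prob_compProd hp hw]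
  exact tsum_congr fun a => congrArg (p a * ·) (prob_singleton (w a) b)

lemma compProd_pushforward (hp : IsPMF p) (f : α → γ) {w : γ → β → ℝ} (hw : ∀ c, IsPMF (w c)) :
    compProd (pushforward f p) w = pushforward (Prod.map f id) (compProd p (w ∘ f)) := by
  funext ⟨c, b⟩
  rw [compProd, pushforward, pushforward, prob_compProd (w := w ∘ f) hp fun a => hw (f a), prob,
    ← tsum_mul_right]
  refine tsum_congr fun a => ?_
  by_cases hac : f a = c
  · have hsection : Prod.mk a ⁻¹' (Prod.map f id ⁻¹' {(c, b)}) = {b} := by ext; simp [hac]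
    rw [hsection, prob_singleton]
    simp [hac]
  · simp [prob, hac]

lemma compProd_le_snd (hp : IsPMF p) (hw : ∀ a, IsPMF (w a)) (z : α × β) :
    compProd p w z ≤ pushforward Prod.snd (compProd p w) z.2 := by
  rw [← prob_singleton (compProd p w) z, pushforward]
  exact prob_mono_of_ne_zero (hp.compProd hw) fun z' _ hz' => congrArg Prod.snd hz'

/-- The correctly decoded pairs form the graph of `ψ`, over which the bound `hS` sums to `K` times
the total output mass. -/
lemma prob_le_prob_decode_ne_add {r : α × β → ℝ} (hr : IsPMF r) (ψ : β → α) {K : ℝ} (hK : 0 ≤ K)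
    {S : Set (α × β)} (hS : ∀ z ∈ S, r z ≤ K * pushforward Prod.snd r z.2) :
    prob r S ≤ prob r {z | ψ z.2 ≠ z.1} + K := by
  set graph : β → α × β := fun b => (ψ b, b)
  have hgraph : graph.Injective := fun b b' h => congrArg Prod.snd h
  have hcover : S ⊆ {z | ψ z.2 ≠ z.1} ∪ (S ∩ Set.range graph) := fun z hz => by
    by_cases hψ : ψ z.2 = z.1
    · exact Or.inr ⟨hz, z.2, Prod.ext hψ rfl⟩
    · exact Or.inl hψ
  have hcorrect : prob r (S ∩ Set.range graph) ≤ K := by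
    have hout := hr.pushforward Prod.snd
    have hsum := (hr.2.summable.indicator (S ∩ Set.range graph)).comp_injective hgraph
    calc prob r (S ∩ Set.range graph)
        = ∑' b, (S ∩ Set.range graph).indicator r (graph b) :=
          (hgraph.tsum_eq fun z hz => (Set.mem_of_indicator_ne_zero hz).2).symm
      _ ≤ ∑' b, K * pushforward Prod.snd r b :=
          hsum.tsum_le_tsum (fun b => Set.indicator_le' (fun z hz => hS z hz.1)
            (fun z _ => mul_nonneg hK (hout.1 z.2)) (graph b)) (hout.2.summable.mul_left K)
      _ = K := by rw [tsum_mul_left, hout.2.tsum_eq, mul_one]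
  calc prob r S
      ≤ prob r ({z | ψ z.2 ≠ z.1} ∪ (S ∩ Set.range graph)) :=
        prob_mono_of_ne_zero hr fun z _ hz => hcover hz
    _ ≤ prob r {z | ψ z.2 ≠ z.1} + K := (prob_union_le hr _ _).trans (by gcongr)

/-- The channel input produced by the encoder `φ` from the source `p` conditioned on the messages
of probability at most `a`. -/
noncomputable def rareInput (p : α → ℝ) (φ : α → γ) (a : ℝ) : γ → ℝ :=
  pushforward φ (condDist p {v | p v ≤ a})

protected lemma IsPMF.rareInput (hp : IsPMF p) (φ : α → γ) (a : ℝ) : IsPMF (rareInput p φ a) :=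
  (hp.condDist _).pushforward φ

lemma prob_rareInput_le (hp : IsPMF p) {w : γ → β → ℝ} (hw : ∀ c, IsPMF (w c)) (φ : α → γ)
    (ψ : β → α) {a b : ℝ} (ha : 0 ≤ a) (hb : 0 ≤ b) (hA : prob p {v | p v ≤ a} ≠ 0) :
    prob (compProd (rareInput p φ a) w)
        {z | w z.1 z.2 ≤ b * pushforward Prod.snd (compProd (rareInput p φ a) w) z.2} ≤
      (prob (compProd p (w ∘ φ)) {z | ψ z.2 ≠ z.1} + a * b) / prob p {v | p v ≤ a} := by
  set A := {v | p v ≤ a}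
  set r := compProd (condDist p A) (w ∘ φ)
  have hμ : IsPMF (condDist p A) := hp.condDist A
  have hr : IsPMF r := hμ.compProd fun v => hw (φ v)
  have hA0 : 0 ≤ prob p A := prob_nonneg hp.1 A
  have hjoint : compProd (rareInput p φ a) w = pushforward (Prod.map φ id) r :=
    compProd_pushforward hμ φ hw
  have herr : prob r {z | ψ z.2 ≠ z.1} ≤
      (prob p A)⁻¹ * prob (compProd p (w ∘ φ)) {z | ψ z.2 ≠ z.1} :=
    prob_le_mul_prob (hp.compProd fun v => hw (φ v)).2.summable hr.2.summable (fun z => by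
      rw [compProd, ← mul_assoc]
      exact mul_le_mul_of_nonneg_right (condDist_le hp.1 hA z.1) ((hw _).1 _)) _
  rw [hjoint, prob_pushforward hr.2.summable, pushforward_pushforward hr.2.summable]
  calc prob r (Prod.map φ id ⁻¹' {z | w z.1 z.2 ≤ b * pushforward Prod.snd r z.2})
      ≤ prob r {z | ψ z.2 ≠ z.1} + a / prob p A * b := by
        refine prob_le_prob_decode_ne_add hr ψ (by positivity) fun z hz => ?_
        rw [mul_assoc]
        exact mul_le_mul (condDist_setOf_le_le hp.1 ha hA z.1) hz ((hw _).1 _) (by positivity)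
    _ ≤ (prob p A)⁻¹ * prob (compProd p (w ∘ φ)) {z | ψ z.2 ≠ z.1} + a / prob p A * b := by
        gcongr
    _ = (prob (compProd p (w ∘ φ)) {z | ψ z.2 ≠ z.1} + a * b) / prob p A := by ring

end Channel

section Words

variable {𝒱 𝒳 𝒴 : Type*} {n : ℕ}

lemma errProb_eq_prob {PV : Word 𝒱 n → ℝ} (hPV : IsPMF PV) {W : Word 𝒳 n → Word 𝒴 n → ℝ}
    (hW : ∀ x, IsPMF (W x)) (φ : Word 𝒱 n → Word 𝒳 n) (ψ : Word 𝒴 n → Word 𝒱 n) :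
    errProb PV W φ ψ = prob (compProd PV (W ∘ φ)) {z | ψ z.2 ≠ z.1} :=
  (prob_compProd (w := W ∘ φ) hPV (fun v => hW (φ v)) {z | ψ z.2 ≠ z.1}).symm

lemma setOf_lt_selfInfo_subset {PV : Word 𝒱 n → ℝ} (hPV : ∀ v, 0 ≤ PV v) (hn : 0 < n) (b : ℝ) :
    {v | (b : EReal) < ((1 / (n : ℝ) * Real.log (1 / PV v) : ℝ) : EReal)} ⊆
      {v | PV v ≤ Real.exp (-(n * b))} := by
  intro v hv
  obtain hv0 | hv0 := (hPV v).eq_or_lt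
  · exact hv0.ge.trans (Real.exp_pos _).le
  · have hn' : (0 : ℝ) < n := Nat.cast_pos.2 hn
    rw [Set.mem_ofPred_eq, EReal.coe_lt_coe_iff, one_div, lt_inv_mul_iff₀ hn', one_div,
      Real.log_inv, lt_neg] at hv
    exact (Real.log_le_iff_le_exp hv0).1 hv.le

lemma prob_infoDensity_lt_le {PX : Word 𝒳 n → ℝ} (hPX : IsPMF PX) {W : Word 𝒳 n → Word 𝒴 n → ℝ}
    (hW : ∀ x, IsPMF (W x)) (hn : 0 < n) (b : ℝ) :
    prob (jointXY PX W)
        {z | ((1 / (n : ℝ) * Real.log (W z.1 z.2 / outDistX PX W z.2) : ℝ) : EReal) < b} ≤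
      prob (compProd PX W)
        {z | W z.1 z.2 ≤ Real.exp (n * b) * pushforward Prod.snd (compProd PX W) z.2} := by
  -- The junk values of `x / 0` and `log 0` occur only at pairs of joint mass zero.
  refine prob_mono_of_ne_zero (hPX.compProd hW) fun z hz hlt => ?_
  have hjoint : 0 < compProd PX W z := ((hPX.compProd hW).1 z).lt_of_ne' hz
  have hout : 0 < pushforward Prod.snd (compProd PX W) z.2 :=
    hjoint.trans_le (compProd_le_snd hPX hW z)
  have hWz : 0 < W z.1 z.2 := ((hW _).1 _).lt_of_ne' (right_ne_zero_of_mul hz)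
  rw [Set.mem_ofPred_eq, EReal.coe_lt_coe_iff, one_div, inv_mul_lt_iff₀ (Nat.cast_pos.2 hn),
    outDistX, ← pushforward_snd_compProd hPX hW] at hlt
  rw [Set.mem_ofPred_eq, ← div_le_iff₀ hout]
  exact (Real.log_le_iff_le_exp (div_pos hWz hout)).1 hlt.le

lemma prob_infoDensity_rareInput_lt_le {PV : Word 𝒱 n → ℝ} (hPV : IsPMF PV)
    {W : Word 𝒳 n → Word 𝒴 n → ℝ} (hW : ∀ x, IsPMF (W x)) (φ : Word 𝒱 n → Word 𝒳 n)
    (ψ : Word 𝒴 n → Word 𝒱 n) (hn : 0 < n) {b b' δ : ℝ} (hδ : 0 < δ)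
    (hb : δ ≤ prob PV {v | (b : EReal) < ((1 / (n : ℝ) * Real.log (1 / PV v) : ℝ) : EReal)}) :
    prob (jointXY (rareInput PV φ (Real.exp (-(n * b)))) W)
        {z | ((1 / (n : ℝ) * Real.log
          (W z.1 z.2 / outDistX (rareInput PV φ (Real.exp (-(n * b)))) W z.2) : ℝ) : EReal) < b'} ≤
      (errProb PV W φ ψ + Real.exp (b' - b) ^ n) / δ := by
  have hrare : δ ≤ prob PV {v | PV v ≤ Real.exp (-(n * b))} :=
    hb.trans (prob_mono_of_ne_zero hPV fun v _ hv => setOf_lt_selfInfo_subset hPV.1 hn b hv)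
  have hexp : Real.exp (-(n * b)) * Real.exp (n * b') = Real.exp (b' - b) ^ n := by
    rw [← Real.exp_add, ← Real.exp_nat_mul]
    congr 1
    ring
  refine (prob_infoDensity_lt_le (hPV.rareInput φ _) hW hn b').trans ?_
  refine (prob_rareInput_le hPV hW φ ψ (Real.exp_pos _).le (Real.exp_pos _).le
    (hδ.trans_le hrare).ne').trans ?_
  rw [hexp, ← errProb_eq_prob hPV hW]
  have herr : 0 ≤ errProb PV W φ ψ := by
    rw [errProb_eq_prob hPV hW]
    exact prob_nonneg (hPV.compProd fun v => hW (φ v)).1 _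
  gcongr

end Words

lemma exists_eventually_le_prob_of_forall_le_plimsup {α : ℕ → Type*} {p : (n : ℕ) → α n → ℝ}
    (hp : ∀ n a, 0 ≤ p n a) {Z : (n : ℕ) → α n → ℝ} {R b : EReal} (hb : b < R)
    (hR : ∀ ns : ℕ → ℕ, StrictMono ns → 0 < ns 0 →
      R ≤ plimsup (fun i => p (ns i)) (fun i => Z (ns i))) :
    ∃ δ : ℝ, 0 < δ ∧ ∀ᶠ n in atTop, δ ≤ prob (p n) {a | b < (Z n a : EReal)} := by
  by_contra! hsmall
  have hfreq (k : ℕ) : ∃ᶠ n in atTop,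
      prob (p n) {a | b < (Z n a : EReal)} < 1 / ((k : ℝ) + 1) ∧ 0 < n :=
    (hsmall _ Nat.one_div_pos_of_nat).and_eventually (eventually_gt_atTop 0)
  obtain ⟨ns, hns, hprob⟩ := extraction_forall_of_frequently hfreq
  have hle : plimsup (fun i => p (ns i)) (fun i => Z (ns i)) ≤ b :=
    sInf_le (squeeze_zero (fun i => prob_nonneg (hp _) _) (fun i => (hprob i).1.le)
      tendsto_one_div_add_atTop_nhds_zero_nat)
  exact hb.not_ge ((hR ns hns (hprob 0).2).trans hle)

theorem separation_converse_source_semi_strong_converse_general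
    {𝒱 𝒳 𝒴 : Type*}
    (PV : (n : ℕ) → Word 𝒱 n → ℝ) (hPV : ∀ n, IsPMF (PV n))
    (W : (n : ℕ) → Word 𝒳 n → Word 𝒴 n → ℝ) (hW : ∀ n x, IsPMF (W n x)) (R : EReal)
    (hR : ∀ ns : ℕ → ℕ, StrictMono ns → 0 < ns 0 →
      R ≤ plimsup (fun i => PV (ns i))
        (fun i v => (1 / (ns i : ℝ)) * Real.log (1 / PV (ns i) v)))
    (htrans : Transmissible PV W) :
    R ≤ supIlow W := by
  obtain ⟨φ, ψ, herr⟩ := htrans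
  refine le_of_forall_lt fun c hc => ?_
  obtain ⟨b', hcb', hb'⟩ := EReal.lt_iff_exists_real_btwn.1 hc
  obtain ⟨b, hb'b, hb⟩ := EReal.lt_iff_exists_real_btwn.1 hb'
  obtain ⟨δ, hδ, hprob⟩ := exists_eventually_le_prob_of_forall_le_plimsup (fun n => (hPV n).1)
    (Z := fun n v => 1 / (n : ℝ) * Real.log (1 / PV n v)) hb hR
  have hexp : Tendsto (fun n : ℕ => Real.exp (b' - b) ^ n) atTop (𝓝 0) :=
    tendsto_pow_atTop_nhds_zero_of_lt_one (Real.exp_pos _).le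
      (Real.exp_lt_one_iff.2 (sub_neg.2 (EReal.coe_lt_coe_iff.1 hb'b)))
  have hbound : Tendsto (fun n => (errProb (PV n) (W n) (φ n) (ψ n) + Real.exp (b' - b) ^ n) / δ)
      atTop (𝓝 0) := by
    simpa using (herr.add hexp).div_const δ
  have hX (n : ℕ) := (hPV n).rareInput (φ n) (Real.exp (-(n * b)))
  refine hcb'.trans_le (le_iSup_of_le ⟨_, hX⟩ (le_sSup (squeeze_zero'
    (.of_forall fun n => prob_nonneg ((hX n).compProd (hW n)).1 _) ?_ hbound)))
  filter_upwards [hprob, eventually_gt_atTop 0] with n hbn hn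
  exact prob_infoDensity_rareInput_lt_le (hPV n) (hW n) (φ n) (ψ n) hn hδ hbn

/-- **Separation theorem, converse part under the source semi-strong converse property**
(Theorem 6.7, part 2, source version, spectral form). -/
theorem separation_converse_source_semi_strong_converse
    {𝒱 𝒳 𝒴 : Type} [Countable 𝒱] [Countable 𝒳] [Countable 𝒴]
    (PV : (n : ℕ) → Word 𝒱 n → ℝ) (hPV : ∀ n, IsPMF (PV n))
    (W : (n : ℕ) → Word 𝒳 n → Word 𝒴 n → ℝ) (hW : ∀ n x, IsPMF (W n x))
    (hssc : ∀ ns : ℕ → ℕ, StrictMono ns → 0 < ns 0 →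
      plimsup (fun i => PV (ns i))
        (fun i v => (1 / (ns i : ℝ)) * Real.log (1 / PV (ns i) v)) = Hbar PV)
    (htrans : Transmissible PV W) :
    Hbar PV ≤ supIlow W :=
  separation_converse_source_semi_strong_converse_general PV hPV W hW (Hbar PV)
    (fun ns hns hpos => (hssc ns hns hpos).ge) htrans

end ISC
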